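/- In the difference field extension setting, let Φ be a quasi-polynomial of degree at most m with Φ(r) = trdeg_K L_r for all sufficiently large r. Then the coefficient of t^m in every constituent polynomial of Φ equals d/(m! · w_1 ⋯ w_m), where d is the σ-transcendence degree of L over K, i.e., the largest cardinality of a finite subset of L that is σ-algebraically independent over K. -/

import Mathlib

/-- The weighted order of `k ∈ ℕ^m`: `ord_w k = w₁k₁ + ⋯ + w_m k_m`. -/
def ordw {m : ℕ} (w : Fin m → ℕ) (k : Fin m → ℕ) : ℕ := ∑ i, w i * k i

/-- `τ^k = α₁^{k₁} ∘ ⋯ ∘ α_m^{k_m}` as a map `L → L`. -/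
noncomputable def tauApp {L : Type*} [Field L] {m : ℕ}
    (α : Fin m → (L →+* L)) (k : Fin m → ℕ) : L → L :=
  (List.ofFn fun i => (⇑(α i))^[k i]).foldr (· ∘ ·) id

/-- `L_r`: the subfield of `L` generated by `K` and all `τ^k η_i` with `ord_w k ≤ r`. -/
noncomputable def diffSubfield {L : Type*} [Field L] {m n : ℕ}
    (K : Subfield L) (α : Fin m → (L →+* L)) (w : Fin m → ℕ)
    (η : Fin n → L) (r : ℕ) : Subfield L :=
  Subfield.closure ((K : Set L) ∪
    {x | ∃ (k : Fin m → ℕ) (i : Fin n), ordw w k ≤ r ∧ x = tauApp α k (η i)})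

/-- The transcendence degree over `K` of a subfield `S` of `L` containing `K`. -/
noncomputable def trdegNat {L : Type*} [Field L] (K S : Subfield L) : ℕ :=
  sSup {d : ℕ | ∃ b : Fin d → L, (∀ i, b i ∈ S) ∧ AlgebraicIndependent K b}

/-- The `σ`-transcendence degree of `L` over `K`: the largest `d` such that there are
`b₁, …, b_d ∈ L` whose family of transforms `{τ^k b_j}` is algebraically independent
over `K`. -/
noncomputable def sigmaTrdeg {L : Type*} [Field L] {m : ℕ}
    (K : Subfield L) (α : Fin m → (L →+* L)) : ℕ :=
  sSup {d : ℕ | ∃ b : Fin d → L,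
    AlgebraicIndependent K (fun p : (Fin m → ℕ) × Fin d => tauApp α p.1 (b p.2))}

/-!
Choose `J` maximal such that the transforms `τ^k η_j`, `j ∈ J`, are algebraically independent over
`K`. For `j ∉ J` some relation has, in a monomial order refining `ord_w`, a leading transform
`τ^{k_j} η_j`. Applying `τ^s` to the relation shows that every `τ^l η_j` with `l ≥ k_j` is algebraic
over earlier transforms, so `η_j` contributes at most the `o(r^m)` exponents `l ≱ k_j` to
`trdeg_K L_r`, and the elements of `J` together contribute at most `|J| · #{k | ord_w k ≤ r + c}`.
Conversely, `d` elements that are `σ`-algebraically independent lie in some `L_e`, and their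
transforms of order at most `r` lie in `L_{r+e}`, which gives `trdeg_K L_{r+e}` at least
`d · #{k | ord_w k ≤ r}`. As `#{k | ord_w k ≤ r} ~ r^m / (m! · w_1 ⋯ w_m)`, comparing the two bounds
yields first that `|J|` is the `σ`-transcendence degree and then the growth of `trdeg_K L_r`.
-/

open Filter Topology

/-! ### Counting exponents of bounded weighted order -/

section Counting

variable {m : ℕ} {w : Fin m → ℕ}

lemma ordw_add (w k l : Fin m → ℕ) : ordw w (k + l) = ordw w k + ordw w l := by
  simp [ordw, mul_add, Finset.sum_add_distrib]

lemma ordw_cons_zero (w : Fin (m + 1) → ℕ) (k : Fin m → ℕ) :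
    ordw w (Fin.cons 0 k) = ordw (Fin.tail w) k := by
  simp [ordw, Fin.sum_univ_succ, Fin.tail]

lemma ordw_single_one (w : Fin m → ℕ) (i : Fin m) : ordw w (Pi.single i 1) = w i := by
  simp [ordw, Pi.single_apply]

lemma mul_le_ordw (w k : Fin m → ℕ) (i : Fin m) : w i * k i ≤ ordw w k :=
  Finset.single_le_sum (f := fun i => w i * k i) (fun _ _ => Nat.zero_le _) (Finset.mem_univ i)

/-- The exponents `k ∈ ℕ^m` with `ord_w k ≤ r`. The box `k i ≤ r` only makes this a `Finset`: it
cuts nothing off when the weights are positive, see `mem_ordBall`. -/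
def ordBall (w : Fin m → ℕ) (r : ℕ) : Finset (Fin m → ℕ) :=
  (Finset.Iic fun _ => r).filter (ordw w · ≤ r)

lemma mem_ordBall (hw : ∀ i, 0 < w i) {r : ℕ} {k : Fin m → ℕ} :
    k ∈ ordBall w r ↔ ordw w k ≤ r := by
  simp only [ordBall, Finset.mem_filter, Finset.mem_Iic, and_iff_right_iff_imp]
  exact fun h i => (Nat.le_mul_of_pos_left _ (hw i)).trans ((mul_le_ordw w k i).trans h)

open scoped Classical in
lemma map_addRight_ordBall (hw : ∀ i, 0 < w i) (k : Fin m → ℕ) (r : ℕ) :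
    (ordBall w r).map (addRightEmbedding k) = {l ∈ ordBall w (r + ordw w k) | k ≤ l} := by
  ext l
  simp only [Finset.mem_map, Finset.mem_filter, mem_ordBall hw, addRightEmbedding_apply]
  constructor
  · rintro ⟨s, hs, rfl⟩
    exact ⟨by rw [ordw_add]; lia, le_add_self⟩
  · rintro ⟨hl, hkl⟩
    obtain ⟨s, rfl⟩ := exists_add_of_le hkl
    exact ⟨s, by rw [ordw_add] at hl; lia, add_comm s k⟩

open scoped Classical in
lemma card_ordBall_add_card_not_le (hw : ∀ i, 0 < w i) (k : Fin m → ℕ) (r : ℕ) :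
    (ordBall w r).card + {l ∈ ordBall w (r + ordw w k) | ¬ k ≤ l}.card =
      (ordBall w (r + ordw w k)).card := by
  rw [← Finset.card_map (addRightEmbedding k), map_addRight_ordBall hw,
    Finset.card_filter_add_card_filter_not]

lemma map_cons_zero_ordBall {w : Fin (m + 1) → ℕ} (hw : ∀ i, 0 < w i) (r : ℕ) :
    (ordBall (Fin.tail w) r).map ⟨Fin.cons 0, Fin.cons_right_injective 0⟩ =
      {l ∈ ordBall w r | l 0 = 0} := by
  ext l
  simp only [Finset.mem_map, Finset.mem_filter, mem_ordBall hw,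
    mem_ordBall (w := Fin.tail w) fun i => hw i.succ, Function.Embedding.coeFn_mk]
  constructor
  · rintro ⟨k, hk, rfl⟩
    exact ⟨(ordw_cons_zero w k).trans_le hk, Fin.cons_zero ..⟩
  · rintro ⟨hl, hl0⟩
    have hcons : Fin.cons 0 (Fin.tail l) = l := by rw [← hl0, Fin.cons_self_tail]
    exact ⟨Fin.tail l, by rwa [← ordw_cons_zero, hcons], hcons⟩

lemma card_filter_ordBall_zero {w : Fin (m + 1) → ℕ} (hw : ∀ i, 0 < w i) (r : ℕ) :
    {l ∈ ordBall w r | l 0 = 0}.card = (ordBall (Fin.tail w) r).card := by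
  rw [← map_cons_zero_ordBall hw, Finset.card_map]

lemma card_ordBall_of_lt {w : Fin (m + 1) → ℕ} (hw : ∀ i, 0 < w i) {r : ℕ} (hr : r < w 0) :
    (ordBall w r).card = (ordBall (Fin.tail w) r).card := by
  rw [← card_filter_ordBall_zero hw, Finset.filter_true_of_mem]
  intro l hl
  have hl0 : w 0 * l 0 < w 0 * 1 := by
    linarith [mul_le_ordw w l 0, (mem_ordBall hw).1 hl]
  exact Nat.lt_one_iff.1 (Nat.lt_of_mul_lt_mul_left hl0)

lemma card_ordBall_add {w : Fin (m + 1) → ℕ} (hw : ∀ i, 0 < w i) (r : ℕ) :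
    (ordBall w (r + w 0)).card =
      (ordBall w r).card + (ordBall (Fin.tail w) (r + w 0)).card := by
  have hsingle (l : Fin (m + 1) → ℕ) : ¬ Pi.single 0 1 ≤ l ↔ l 0 = 0 := by
    simp [Pi.le_def, Fin.forall_fin_succ]
  have h := card_ordBall_add_card_not_le hw (Pi.single 0 1) r
  simp only [ordw_single_one, hsingle] at h
  rw [← h, ← card_filter_ordBall_zero hw]

lemma card_ordBall_zero (w : Fin 0 → ℕ) (r : ℕ) : (ordBall w r).card = 1 := by
  rw [Finset.card_eq_one]
  exact ⟨0, Finset.ext fun k => by simp [mem_ordBall, ordw, Subsingleton.elim k 0]⟩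

lemma add_pow_le_pow_add_mul {R : Type*} [CommRing R] [LinearOrder R] [IsStrictOrderedRing R]
    {x y : R} (hx : 0 ≤ x) (hy : 0 ≤ y) (n : ℕ) :
    (x + y) ^ n ≤ x ^ n + n * (x + y) ^ (n - 1) * y := by
  have h := pow_add_mul_le_add_pow (add_nonneg hx hy) (b := -y) (by linarith) n
  rw [add_neg_cancel_right] at h
  linarith

theorem pow_le_mul_card_ordBall (hw : ∀ i, 0 < w i) (r : ℕ) :
    r ^ m ≤ m.factorial * (∏ i, w i) * (ordBall w r).card := by
  induction m generalizing r with
  | zero => simp [card_ordBall_zero]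
  | succ m ihm =>
    have hface (s : ℕ) : (m + 1) * s ^ m * w 0 ≤
        (m + 1) * m.factorial * (w 0 * ∏ i : Fin m, w i.succ) * (ordBall (Fin.tail w) s).card :=
      calc (m + 1) * s ^ m * w 0
          ≤ (m + 1) * (m.factorial * (∏ i, Fin.tail w i) * (ordBall (Fin.tail w) s).card) *
            w 0 := by gcongr; exact ihm (fun i => hw i.succ) s
        _ = _ := by simp only [Fin.tail]; ring
    have hpow (s : ℕ) : (s + w 0) ^ (m + 1) ≤ s ^ (m + 1) + (m + 1) * (s + w 0) ^ m * w 0 := by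
      exact_mod_cast add_pow_le_pow_add_mul (R := ℤ) (Int.natCast_nonneg s)
        (Int.natCast_nonneg (w 0)) (m + 1)
    induction r using Nat.strong_induction_on with
    | _ r ihr =>
      rw [Nat.factorial_succ, Fin.prod_univ_succ]
      obtain hr | hr := lt_or_ge r (w 0)
      · rw [card_ordBall_of_lt hw hr]
        calc r ^ (m + 1) = r ^ m * r := pow_succ r m
          _ ≤ (m + 1) * r ^ m * w 0 :=
            Nat.mul_le_mul (Nat.le_mul_of_pos_left _ m.succ_pos) hr.le
          _ ≤ _ := hface r
      · obtain ⟨s, rfl⟩ := Nat.exists_eq_add_of_le' hr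
        have ih := ihr s (Nat.lt_add_of_pos_right (hw 0))
        rw [Nat.factorial_succ, Fin.prod_univ_succ] at ih
        rw [card_ordBall_add hw, mul_add]
        exact (hpow s).trans (add_le_add ih (hface _))

theorem mul_card_ordBall_le_pow (hw : ∀ i, 0 < w i) (r : ℕ) :
    m.factorial * (∏ i, w i) * (ordBall w r).card ≤ (r + ∑ i, w i) ^ m := by
  induction m generalizing r with
  | zero => simp [card_ordBall_zero]
  | succ m ihm =>
    have hface (s : ℕ) : (m + 1) * m.factorial * (w 0 * ∏ i : Fin m, w i.succ) *
        (ordBall (Fin.tail w) s).card ≤ (m + 1) * (s + ∑ i : Fin m, w i.succ) ^ m * w 0 :=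
      calc _ = (m + 1) * (m.factorial * (∏ i, Fin.tail w i) * (ordBall (Fin.tail w) s).card) *
            w 0 := by simp only [Fin.tail]; ring
        _ ≤ _ := by gcongr; exact ihm (fun i => hw i.succ) s
    have hpow (x : ℕ) : x ^ (m + 1) + (m + 1) * x ^ m * w 0 ≤ (x + w 0) ^ (m + 1) := by
      exact_mod_cast pow_add_mul_le_add_pow (Nat.zero_le x) (Nat.zero_le (2 * x + w 0)) (m + 1)
    induction r using Nat.strong_induction_on with
    | _ r ihr =>
      rw [Nat.factorial_succ, Fin.prod_univ_succ, Fin.sum_univ_succ, add_left_comm,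
        add_comm (w 0)]
      obtain hr | hr := lt_or_ge r (w 0)
      · rw [card_ordBall_of_lt hw hr]
        exact (hface r).trans ((Nat.le_add_left _ _).trans (hpow _))
      · obtain ⟨s, rfl⟩ := Nat.exists_eq_add_of_le' hr
        have ih := ihr s (Nat.lt_add_of_pos_right (hw 0))
        rw [Nat.factorial_succ, Fin.prod_univ_succ, Fin.sum_univ_succ, ← add_assoc] at ih
        rw [card_ordBall_add hw, mul_add]
        exact (add_le_add ih (hface _)).trans (hpow _)

theorem tendsto_card_ordBall_div_pow (hw : ∀ i, 0 < w i) (a b : ℕ) :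
    Tendsto (fun r : ℕ => ((ordBall w (r + a)).card : ℚ) / ((r + b : ℕ) : ℚ) ^ m) atTop
      (𝓝 (1 / (m.factorial * ∏ i, (w i : ℚ)))) := by
  set C : ℚ := m.factorial * ∏ i, (w i : ℚ) with hC
  have hC0 : 0 < C := mul_pos (by positivity) (Finset.prod_pos fun i _ => by exact_mod_cast hw i)
  have hlim (s : ℕ) : Tendsto (fun r : ℕ => ((r + s : ℕ) / (r + b : ℕ) : ℚ) ^ m / C) atTop
      (𝓝 (1 / C)) := by
    have h := tendsto_add_mul_div_add_mul_atTop_nhds (s : ℚ) b 1 one_ne_zero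
    simpa [add_comm] using (h.pow m).div_const C
  refine tendsto_of_tendsto_of_tendsto_of_le_of_le (hlim a) (hlim (a + ∑ i, w i))
    (fun r => ?_) fun r => ?_
  · have h : ((r + a : ℕ) : ℚ) ^ m ≤ C * (ordBall w (r + a)).card := by
      rw [hC]
      exact_mod_cast pow_le_mul_card_ordBall hw (r + a)
    rw [div_pow, div_right_comm]
    gcongr
    exact (div_le_iff₀' hC0).2 h
  · have h : C * (ordBall w (r + a)).card ≤ ((r + (a + ∑ i, w i) : ℕ) : ℚ) ^ m := by
      rw [hC, ← add_assoc]
      exact_mod_cast mul_card_ordBall_le_pow hw (r + a)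
    rw [div_pow, div_right_comm]
    gcongr
    exact (le_div_iff₀' hC0).2 h

open scoped Classical in
theorem tendsto_card_not_le_div_pow (hw : ∀ i, 0 < w i) (k : Fin m → ℕ) :
    Tendsto (fun r : ℕ => ({l ∈ ordBall w r | ¬ k ≤ l}.card : ℚ) / (r : ℚ) ^ m) atTop (𝓝 0) := by
  rw [← tendsto_add_atTop_iff_nat (ordw w k)]
  have h := (tendsto_card_ordBall_div_pow hw (ordw w k) (ordw w k)).sub
    (tendsto_card_ordBall_div_pow hw 0 (ordw w k))
  rw [sub_self] at h
  refine h.congr fun r => ?_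
  rw [← sub_div, add_zero, ← card_ordBall_add_card_not_le hw k r, Nat.cast_add,
    add_sub_cancel_left]

open scoped Classical in
theorem tendsto_mul_card_add_sum_div_pow {ι : Type*} (hw : ∀ i, 0 < w i) (d c : ℕ) (s : Finset ι)
    (k : ι → Fin m → ℕ) :
    Tendsto (fun r : ℕ => ((d * (ordBall w (r + c)).card +
      ∑ j ∈ s, {l ∈ ordBall w r | ¬ k j ≤ l}.card : ℕ) : ℚ) / (r : ℚ) ^ m) atTop
      (𝓝 (d / (m.factorial * ∏ i, (w i : ℚ)))) := by
  have h := ((tendsto_card_ordBall_div_pow hw c 0).const_mul (d : ℚ)).add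
    (tendsto_finsetSum s fun j _ => tendsto_card_not_le_div_pow hw (k j))
  rw [mul_one_div, Finset.sum_const_zero, add_zero] at h
  refine h.congr fun r => ?_
  rw [← Finset.sum_div, mul_div_assoc', add_zero, ← add_div]
  push_cast
  rfl

end Counting

section Polynomial

open Polynomial

variable {𝕜 : Type*} [NormedField 𝕜] [LinearOrder 𝕜] [IsStrictOrderedRing 𝕜] [OrderTopology 𝕜]

theorem natDegree_le_and_coeff_eq_of_tendsto {ι : Type*} {l : Filter ι} [l.NeBot] {u : ι → 𝕜}
    (hu : Tendsto u l atTop) {p : 𝕜[X]} {m : ℕ} {c : 𝕜}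
    (h : Tendsto (fun i => p.eval (u i) / u i ^ m) l (𝓝 c)) :
    p.natDegree ≤ m ∧ p.coeff m = c := by
  have hX : (X ^ m : 𝕜[X]).degree = m := degree_X_pow m
  replace h : Tendsto (fun i => p.eval (u i) / (X ^ m : 𝕜[X]).eval (u i)) l (𝓝 c) := by
    simpa only [eval_pow, eval_X] using h
  have hdeg : p.degree ≤ m := by
    by_contra! hlt
    have htop := (p.abs_div_tendsto_atTop_atTop_of_degree_gt _ (hX.trans_lt hlt)
      (pow_ne_zero m X_ne_zero)).comp hu
    exact not_tendsto_nhds_of_tendsto_atTop htop |c| h.abs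
  refine ⟨natDegree_le_of_degree_le hdeg, ?_⟩
  obtain hlt | heq := hdeg.lt_or_eq
  · rw [coeff_eq_zero_of_degree_lt hlt]
    exact tendsto_nhds_unique
      ((p.div_tendsto_atTop_zero_of_degree_lt _ (hlt.trans_eq hX.symm)).comp hu) h
  · have hlim := (p.div_tendsto_atTop_leadingCoeff_div_of_degree_eq _ (heq.trans hX.symm)).comp hu
    rw [leadingCoeff_X_pow, div_one, leadingCoeff, natDegree_eq_of_degree_eq_some heq] at hlim
    exact tendsto_nhds_unique hlim h

end Polynomial

/-! ### The algebraic matroid -/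

section AlgebraicMatroid

open AlgebraicIndependent (matroid)

variable {ι R A : Type*} [CommRing R] [CommRing A] [Algebra R A]

lemma algebraicIndepOn_of_finite {x : ι → A} {s : Set ι}
    (h : ∀ u ⊆ s, u.Finite → AlgebraicIndepOn R x u) : AlgebraicIndepOn R x s := by
  refine algebraicIndependent_of_finite_type fun u hu => ?_
  refine (h _ (Subtype.coe_image_subset s u) (hu.image _)).comp
    (fun i : u => ⟨i, Set.mem_image_of_mem _ i.2⟩) fun i j hij => ?_
  exact Subtype.ext (Subtype.ext (congrArg (fun k => k.1) hij))

variable [FaithfulSMul R A] [IsDomain A]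

lemma mem_closure_matroid_iff {s : Set A} {x : A} :
    x ∈ (matroid R A).closure s ↔ IsAlgebraic (Algebra.adjoin R s) x := by
  rw [AlgebraicIndependent.matroid_closure_eq]
  rfl

lemma apply_mem_closure_matroid_image {x : ι → A} {s : Set ι} {i : ι} (hi : i ∈ s) :
    x i ∈ (matroid R A).closure (x '' s) :=
  (matroid R A).mem_closure_of_mem (Set.mem_image_of_mem x hi) (Set.subset_univ _)

lemma exists_finite_mem_closure_matroid_image {x : ι → A} {s : Set ι} {y : A}
    (hy : y ∈ (matroid R A).closure (x '' s)) :
    ∃ t ⊆ s, t.Finite ∧ y ∈ (matroid R A).closure (x '' t) := by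
  obtain ⟨I, hI, hfin, -, hyI⟩ := Matroid.exists_mem_finite_closure_of_mem_closure hy
  exact Set.exists_subset_image_finite_and
    (p := fun I => y ∈ (matroid R A).closure I).1 ⟨I, hI, hfin, hyI⟩

theorem exists_mem_closure_matroid_image_lt {κ : Type*} [LinearOrder κ] {x : ι → A} {key : ι → κ}
    {s t : Set ι} (hkey : Set.InjOn key t) (hs : AlgebraicIndepOn R x s)
    (hst : ¬ AlgebraicIndepOn R x (s ∪ t)) :
    ∃ i ∈ t, x i ∈ (matroid R A).closure (x '' (s ∪ {j ∈ t | key j < key i})) := by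
  classical
  by_contra! hcon
  have hfin (u : Finset ι) (hu : ↑u ⊆ t) : AlgebraicIndepOn R x (s ∪ u) := by
    induction u using Finset.induction_on_max_value key with
    | empty => simpa using hs
    | insert i u hi hmax ih =>
      rw [Finset.coe_insert, Set.insert_subset_iff] at hu
      rw [Finset.coe_insert, Set.union_insert]
      refine (ih hu.2).insert fun halg => hcon i hu.1 ?_
      refine (matroid R A).closure_subset_closure (Set.image_mono ?_)
        (mem_closure_matroid_iff.2 halg)
      refine Set.union_subset_union_right s fun j hj => ⟨hu.2 hj, (hmax j hj).lt_of_ne fun h => ?_⟩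
      exact hi (hkey (hu.2 hj) hu.1 h ▸ hj)
  refine hst (algebraicIndepOn_of_finite fun u hu hufin => ?_)
  have htfin : (u ∩ t).Finite := hufin.inter_of_left t
  refine (hfin htfin.toFinset (by simp)).mono fun i hi => ?_
  rw [htfin.coe_toFinset]
  exact (hu hi).imp_right fun hit => ⟨hi, hit⟩

variable {L : Type*} [Field L]

/-- The matroid on `L` of algebraic independence over a subfield `K`: a set spans exactly the
elements that are algebraic over it, and the rank of a set is its transcendence degree. -/
noncomputable abbrev algMatroid (K : Subfield L) : Matroid L := matroid K L

lemma map_mem_closure_algMatroid {L' : Type*} [Field L'] {K : Subfield L} {K' : Subfield L'}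
    (f : L →+* L') (hf : Set.MapsTo f K K') {s : Set L} {x : L}
    (hx : x ∈ (algMatroid K).closure s) : f x ∈ (algMatroid K').closure (f '' s) := by
  rw [mem_closure_matroid_iff] at hx ⊢
  have hadjoin (y : Algebra.adjoin K s) : f y ∈ Algebra.adjoin K' (f '' s) := by
    obtain ⟨y, hy⟩ := y
    induction hy using Algebra.adjoin_induction with
    | mem y hy => exact Algebra.subset_adjoin ⟨y, hy, rfl⟩
    | algebraMap c => exact (Algebra.adjoin K' (f '' s)).algebraMap_mem ⟨f c, hf c.2⟩
    | add y z _ _ hy hz => simpa using add_mem hy hz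
    | mul y z _ _ hy hz => simpa using mul_mem hy hz
  exact hx.ringHom_of_comp_eq ((f.comp (Algebra.adjoin K s).val.toRingHom).codRestrict _ hadjoin)
    f (fun y z h => Subtype.ext (f.injective (congrArg Subtype.val h))) rfl

lemma subfieldClosure_subset_closure_algMatroid (K : Subfield L) (s : Set L) :
    (Subfield.closure (K ∪ s) : Set L) ⊆ (algMatroid K).closure s := by
  intro x hx
  rw [mem_closure_matroid_iff]
  rw [SetLike.mem_coe] at hx
  induction hx using Subfield.closure_induction with
  | mem x h =>
    obtain h | h := h
    · exact isAlgebraic_algebraMap (algebraMap K (Algebra.adjoin K s) ⟨x, h⟩)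
    · exact mem_closure_matroid_iff.1 ((algMatroid K).mem_closure_of_mem h (Set.subset_univ s))
  | one => exact isAlgebraic_one
  | add x y _ _ hx hy => exact hx.add hy
  | neg x _ hx => exact hx.neg
  | inv x _ hx => exact hx.inv
  | mul x y _ _ hx hy => exact hx.mul hy

lemma eRk_subfieldClosure (K : Subfield L) (s : Set L) :
    (algMatroid K).eRk (Subfield.closure (K ∪ s)) = (algMatroid K).eRk s := by
  refine le_antisymm ?_ ((algMatroid K).eRk_mono
    (Set.subset_union_right.trans Subfield.subset_closure))
  rw [← (algMatroid K).eRk_closure_eq s]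
  exact (algMatroid K).eRk_mono (subfieldClosure_subset_closure_algMatroid K s)

lemma exists_algebraicIndependent_fin_iff {K : Subfield L} {s : Set L} {d : ℕ} :
    (∃ b : Fin d → L, (∀ i, b i ∈ s) ∧ AlgebraicIndependent K b) ↔
      (d : ℕ∞) ≤ (algMatroid K).eRk s := by
  rw [Matroid.le_eRk_iff]
  constructor
  · rintro ⟨b, hbs, hb⟩
    refine ⟨Set.range b, Set.range_subset_iff.2 hbs,
      AlgebraicIndependent.matroid_indep_iff.2 hb.to_subtype_range, ?_⟩
    rw [← Set.image_univ, hb.injective.encard_image, Set.encard_univ,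
      ENat.card_eq_coe_fintype_card, Fintype.card_fin]
  · rintro ⟨I, hIs, hI, hcard⟩
    have := (Set.finite_of_encard_eq_coe hcard).to_subtype
    obtain e := Finite.equivFinOfCardEq (α := I) (n := d)
      (by rw [Nat.card_coe_set_eq, Set.ncard, hcard, ENat.toNat_natCast])
    exact ⟨fun i => e.symm i, fun i => hIs (e.symm i).2,
      (AlgebraicIndependent.matroid_indep_iff.1 hI).comp e.symm e.symm.injective⟩

theorem coe_trdegNat {K S : Subfield L} (hS : (algMatroid K).IsRkFinite S) :
    (trdegNat K S : ℕ∞) = (algMatroid K).eRk S := by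
  lift (algMatroid K).eRk S to ℕ using hS.eRk_lt_top.ne with r hr
  have hset : {d : ℕ | ∃ b : Fin d → L, (∀ i, b i ∈ S) ∧ AlgebraicIndependent K b} = Set.Iic r :=
    Set.ext fun d => exists_algebraicIndependent_fin_iff.trans (by rw [← hr]; simp)
  rw [trdegNat, hset, csSup_Iic]

end AlgebraicMatroid

/-! ### Transforms -/

section Transforms

lemma prod_ofFn_mul {M : Type*} [Monoid M] {m : ℕ} {f g : Fin m → M}
    (h : ∀ i j, Commute (g i) (f j)) :
    (List.ofFn fun i => f i * g i).prod = (List.ofFn f).prod * (List.ofFn g).prod := by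
  induction m with
  | zero => simp
  | succ m ih =>
    have hcomm : Commute (g 0) (List.ofFn fun i : Fin m => f i.succ).prod :=
      Commute.list_prod_right _ _ fun x hx => by
        obtain ⟨i, rfl⟩ := List.mem_ofFn.1 hx
        exact h 0 i.succ
    simp only [List.ofFn_succ, List.prod_cons]
    rw [ih fun i j => h i.succ j.succ, mul_assoc, mul_assoc, ← mul_assoc (g 0), hcomm.eq, mul_assoc]

lemma coe_list_prod_ringHom {R : Type*} [NonAssocSemiring R] (l : List (R →+* R)) :
    ⇑l.prod = (l.map (⇑)).foldr (· ∘ ·) id := by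
  induction l with
  | nil => rfl
  | cons f l ih => rw [List.prod_cons, List.map_cons, List.foldr_cons, ← ih, RingHom.coe_mul]

variable {L : Type*} [Field L] {m : ℕ} {α : Fin m → L →+* L}

/-- The map `τ^k` of `tauApp`, bundled as a ring endomorphism. -/
noncomputable def tauHom (α : Fin m → L →+* L) (k : Fin m → ℕ) : L →+* L :=
  (List.ofFn fun i => α i ^ k i).prod

lemma coe_tauHom (α : Fin m → L →+* L) (k : Fin m → ℕ) : ⇑(tauHom α k) = tauApp α k := by
  rw [tauHom, coe_list_prod_ringHom, List.map_ofFn, tauApp]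
  simp only [Function.comp_def, RingHom.coe_pow]

lemma tauApp_add (hcomm : ∀ i j, (α i).comp (α j) = (α j).comp (α i)) (k l : Fin m → ℕ) (x : L) :
    tauApp α (k + l) x = tauApp α k (tauApp α l x) := by
  have hα (i j : Fin m) : Commute (α i) (α j) := hcomm i j
  have h : tauHom α (k + l) = tauHom α k * tauHom α l := by
    simp only [tauHom, Pi.add_apply, pow_add]
    exact prod_ofFn_mul fun i j => (hα i j).pow_pow _ _
  rw [← coe_tauHom, h, RingHom.coe_mul, coe_tauHom, coe_tauHom, Function.comp_apply]

lemma mapsTo_tauApp {s : Set L} (hs : ∀ i, Set.MapsTo (α i) s s) (k : Fin m → ℕ) :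
    Set.MapsTo (tauApp α k) s s := by
  refine List.foldrRecOn (motive := (Set.MapsTo · s s)) _ _ (Set.mapsTo_id s) fun f hf g hg => ?_
  obtain ⟨i, rfl⟩ := List.mem_ofFn.1 hg
  exact ((hs i).iterate (k i)).comp hf

variable {ι : Type*}

/-- The family of all transforms `τ^k η_j`, indexed by the pairs `(k, j)`. -/
noncomputable def transform (α : Fin m → L →+* L) (η : ι → L) (p : (Fin m → ℕ) × ι) : L :=
  tauApp α p.1 (η p.2)

lemma tauApp_transform (hcomm : ∀ i j, (α i).comp (α j) = (α j).comp (α i)) (η : ι → L)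
    (s : Fin m → ℕ) (p : (Fin m → ℕ) × ι) :
    tauApp α s (transform α η p) = transform α η (p.1 + s, p.2) := by
  rw [transform, transform, ← tauApp_add hcomm, add_comm]

/-- The elements `η_j` with `j ∈ J` are `σ`-algebraically independent over `K`, that is, all their
transforms together are algebraically independent over `K`. -/
def SigmaIndepOn (K : Subfield L) (α : Fin m → L →+* L) (η : ι → L) (J : Set ι) : Prop :=
  AlgebraicIndepOn K (transform α η) (Prod.snd ⁻¹' J)

lemma sigmaIndepOn_empty (K : Subfield L) (α : Fin m → L →+* L) (η : ι → L) :
    SigmaIndepOn K α η ∅ := by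
  rw [SigmaIndepOn, Set.preimage_empty]
  exact algebraicIndependent_empty_type_iff.2 (algebraMap K L).injective

lemma algebraicIndependent_transform_comp {κ : Type*} {K : Subfield L} {η : ι → L} {J : Set ι}
    (h : SigmaIndepOn K α η J) {f : κ → ι} (hf : Function.Injective f) (hfJ : ∀ i, f i ∈ J) :
    AlgebraicIndependent K (transform α (η ∘ f)) :=
  AlgebraicIndependent.comp h
    (fun p : (Fin m → ℕ) × κ => (⟨(p.1, f p.2), hfJ p.2⟩ : Prod.snd ⁻¹' J)) fun p q hpq => by
      obtain ⟨h₁, h₂⟩ := Prod.ext_iff.1 (congrArg Subtype.val hpq)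
      exact Prod.ext h₁ (hf h₂)

end Transforms

/-! ### Leading relations -/

section LeadingRelations

variable {L : Type*} [Field L] {m : ℕ} {ι : Type*} {K : Subfield L} {α : Fin m → L →+* L}
  {w : Fin m → ℕ} {η : ι → L} {J : Set ι} {j : ι}

/-- The key of the monomial order on exponents that compares weighted orders first and breaks ties
lexicographically. -/
def weightLexKey (w k : Fin m → ℕ) : ℕ ×ₗ Lex (Fin m → ℕ) :=
  toLex (ordw w k, toLex k)

lemma weightLexKey_injective (w : Fin m → ℕ) : Function.Injective (weightLexKey w) :=
  fun _ _ h => toLex.injective (congrArg Prod.snd (toLex.injective h))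

lemma weightLexKey_add (w k l : Fin m → ℕ) :
    weightLexKey w (k + l) = weightLexKey w k + weightLexKey w l := by
  rw [weightLexKey, ordw_add]
  rfl

lemma ordw_le_of_weightLexKey_lt {k l : Fin m → ℕ} (h : weightLexKey w k < weightLexKey w l) :
    ordw w k ≤ ordw w l :=
  Prod.Lex.monotone_fst _ _ h.le

/-- `τ^k η_j` is algebraic over `K`, the transforms of order at most `c` of the `η_i` with `i ∈ J`
and the transforms `τ^l η_j` with `l` before `k` in the monomial order: in a relation witnessing
this, `τ^k` is the leading transform of `η_j`. -/
def IsLeadingExponent (K : Subfield L) (α : Fin m → L →+* L) (w : Fin m → ℕ) (η : ι → L)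
    (J : Set ι) (j : ι) (c : ℕ) (k : Fin m → ℕ) : Prop :=
  transform α η (k, j) ∈ (algMatroid K).closure (transform α η ''
    ({p | p.2 ∈ J ∧ ordw w p.1 ≤ c} ∪ {p | p.2 = j ∧ weightLexKey w p.1 < weightLexKey w k}))

theorem exists_isLeadingExponent (w : Fin m → ℕ) (hJ : SigmaIndepOn K α η J)
    (hj : ¬ SigmaIndepOn K α η (insert j J)) : ∃ c k, IsLeadingExponent K α w η J j c k := by
  have hkey : Set.InjOn (fun p => weightLexKey w p.1) (Prod.snd ⁻¹' {j} : Set ((Fin m → ℕ) × ι)) :=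
    fun p hp q hq h => Prod.ext (weightLexKey_injective w h) (hp.trans hq.symm)
  rw [SigmaIndepOn, ← Set.union_singleton, Set.preimage_union] at hj
  obtain ⟨⟨k, i⟩, hi, hk⟩ := exists_mem_closure_matroid_image_lt hkey hJ hj
  obtain rfl : i = j := hi
  obtain ⟨t, htsub, htfin, hkt⟩ := exists_finite_mem_closure_matroid_image hk
  obtain ⟨c, hc⟩ := (htfin.image fun p => ordw w p.1).bddAbove
  refine ⟨c, k, (algMatroid K).closure_subset_closure (Set.image_mono fun p hp => ?_) hkt⟩
  exact (htsub hp).imp_left fun hpJ => ⟨hpJ, hc (Set.mem_image_of_mem _ hp)⟩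

theorem IsLeadingExponent.add (hcomm : ∀ i j, (α i).comp (α j) = (α j).comp (α i))
    (hK : ∀ i, Set.MapsTo (α i) K K) {c : ℕ} {k : Fin m → ℕ}
    (h : IsLeadingExponent K α w η J j c k) (s : Fin m → ℕ) :
    IsLeadingExponent K α w η J j (c + ordw w s) (k + s) := by
  have himage := map_mem_closure_algMatroid (tauHom α s)
    (by rw [coe_tauHom]; exact mapsTo_tauApp hK s) h
  rw [coe_tauHom, tauApp_transform hcomm] at himage
  refine (algMatroid K).closure_subset_closure ?_ himage
  rintro _ ⟨_, ⟨p, hp, rfl⟩, rfl⟩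
  refine ⟨(p.1 + s, p.2), ?_, (tauApp_transform hcomm η s p).symm⟩
  refine hp.imp (fun hp => ⟨hp.1, ?_⟩) fun hp => ⟨hp.1, ?_⟩
  · rw [ordw_add]
    exact add_le_add_left hp.2 _
  · simp only [weightLexKey_add]
    exact add_lt_add_left hp.2 _

/-- Dividing by the leading exponent: every multiple of it can be replaced by transforms that come
earlier in the monomial order, which is a well-order. -/
theorem IsLeadingExponent.transform_mem_closure
    (hcomm : ∀ i j, (α i).comp (α j) = (α j).comp (α i)) (hK : ∀ i, Set.MapsTo (α i) K K)
    {c : ℕ} {k : Fin m → ℕ} (h : IsLeadingExponent K α w η J j c k) {r : ℕ} {l : Fin m → ℕ}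
    (hl : ordw w l ≤ r) :
    transform α η (l, j) ∈ (algMatroid K).closure (transform α η ''
      ({p | p.2 ∈ J ∧ ordw w p.1 ≤ r + c} ∪ {p | p.2 = j ∧ ordw w p.1 ≤ r ∧ ¬ k ≤ p.1})) := by
  induction l using (InvImage.wf (weightLexKey w) wellFounded_lt).induction with
  | _ l ih =>
    by_cases hkl : k ≤ l
    · obtain ⟨s, rfl⟩ := exists_add_of_le hkl
      refine Matroid.closure_subset_closure_of_subset_closure ?_ (h.add hcomm hK s)
      rintro _ ⟨⟨a, i⟩, ⟨hiJ, ha⟩ | ⟨hij, ha⟩, rfl⟩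
      · have hs : ordw w s ≤ r := by
          rw [ordw_add] at hl
          exact le_of_add_le_right hl
        exact apply_mem_closure_matroid_image
          (Or.inl ⟨hiJ, ha.trans (by rw [add_comm r]; exact add_le_add_right hs c)⟩)
      · obtain rfl : i = j := hij
        exact ih a ha ((ordw_le_of_weightLexKey_lt ha).trans hl)
    · exact apply_mem_closure_matroid_image (Or.inr ⟨rfl, hl, hkl⟩)

lemma IsLeadingExponent.mono {c d : ℕ} {k : Fin m → ℕ} (h : IsLeadingExponent K α w η J j c k)
    (hcd : c ≤ d) : IsLeadingExponent K α w η J j d k :=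
  (algMatroid K).closure_subset_closure (Set.image_mono fun _ =>
    Or.imp_left fun hp => ⟨hp.1, hp.2.trans hcd⟩) h

theorem exists_sigmaIndepOn_isLeadingExponent [Finite ι] (K : Subfield L) (α : Fin m → L →+* L)
    (w : Fin m → ℕ) (η : ι → L) :
    ∃ J : Finset ι, SigmaIndepOn K α η J ∧
      ∃ (c : ℕ) (k : ι → Fin m → ℕ), ∀ j ∉ J, IsLeadingExponent K α w η J j c (k j) := by
  classical
  have hempty : SigmaIndepOn K α η (∅ : Finset ι) := by
    rw [Finset.coe_empty]
    exact sigmaIndepOn_empty K α η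
  obtain ⟨J, hJ⟩ := (Set.toFinite {J : Finset ι | SigmaIndepOn K α η J}).exists_maximal
    ⟨∅, hempty⟩
  have hlead (j : ι) : ∃ c k, j ∉ J → IsLeadingExponent K α w η J j c k := by
    by_cases hj : j ∈ J
    · exact ⟨0, 0, fun h => absurd hj h⟩
    · have hins := hJ.not_prop_of_gt (Finset.ssubset_insert hj)
      rw [Set.mem_ofPred_eq, Finset.coe_insert] at hins
      obtain ⟨c, k, h⟩ := exists_isLeadingExponent w hJ.prop hins
      exact ⟨c, k, fun _ => h⟩
  choose c k hk using hlead
  obtain ⟨C, hC⟩ := (Set.finite_range c).bddAbove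
  exact ⟨J, hJ.prop, C, k, fun j hj => (hk j hj).mono (hC (Set.mem_range_self j))⟩

end LeadingRelations

/-! ### The subfields `L_r` -/

section DiffSubfield

variable {L : Type*} [Field L] {m n : ℕ} {K : Subfield L} {α : Fin m → L →+* L} {w : Fin m → ℕ}
  {η : Fin n → L}

lemma diffSubfield_eq_closure (K : Subfield L) (α : Fin m → L →+* L) (w : Fin m → ℕ)
    (η : Fin n → L) (r : ℕ) :
    diffSubfield K α w η r =
      Subfield.closure (K ∪ transform α η '' {p | ordw w p.1 ≤ r}) := by
  rw [diffSubfield]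
  congr 2
  ext x
  constructor
  · rintro ⟨k, i, hk, rfl⟩
    exact ⟨(k, i), hk, rfl⟩
  · rintro ⟨⟨k, i⟩, hk, rfl⟩
    exact ⟨k, i, hk, rfl⟩

lemma diffSubfield_mono (K : Subfield L) (α : Fin m → L →+* L) (w : Fin m → ℕ) (η : Fin n → L) :
    Monotone (diffSubfield K α w η) := by
  refine fun r s h => Subfield.closure_mono (Set.union_subset_union_right _ ?_)
  rintro x ⟨k, i, hk, hx⟩
  exact ⟨k, i, hk.trans h, hx⟩

lemma exists_mem_diffSubfield (w : Fin m → ℕ)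
    (hgen : Subfield.closure ((K : Set L) ∪
      {x | ∃ (k : Fin m → ℕ) (i : Fin n), x = tauApp α k (η i)}) = ⊤) (x : L) :
    ∃ r, x ∈ diffSubfield K α w η r := by
  rw [← Subfield.mem_iSup_of_directed (diffSubfield_mono K α w η).directed_le]
  suffices h : ⊤ ≤ ⨆ r, diffSubfield K α w η r from h (Subfield.mem_top x)
  rw [← hgen, Subfield.closure_le]
  rintro y (hy | ⟨k, i, rfl⟩)
  · exact (le_iSup (diffSubfield K α w η) 0) (Subfield.subset_closure (Or.inl hy))
  · exact (le_iSup (diffSubfield K α w η) (ordw w k))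
      (Subfield.subset_closure (Or.inr ⟨k, i, le_rfl, rfl⟩))

lemma tauApp_mem_diffSubfield (hcomm : ∀ i j, (α i).comp (α j) = (α j).comp (α i))
    (hK : ∀ i, Set.MapsTo (α i) K K) {r : ℕ} {x : L} (hx : x ∈ diffSubfield K α w η r)
    (k : Fin m → ℕ) : tauApp α k x ∈ diffSubfield K α w η (r + ordw w k) := by
  rw [← coe_tauHom, ← Subfield.mem_comap]
  refine Subfield.closure_le.2 ?_ hx
  rintro y (hy | ⟨l, i, hl, rfl⟩) <;> rw [SetLike.mem_coe, Subfield.mem_comap, coe_tauHom]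
  · exact Subfield.subset_closure (Or.inl (mapsTo_tauApp hK k hy))
  · rw [← tauApp_add hcomm, add_comm k l]
    exact Subfield.subset_closure
      (Or.inr ⟨l + k, i, (ordw_add w l k).trans_le (add_le_add_left hl _), rfl⟩)

lemma coe_trdegNat_diffSubfield (K : Subfield L) (α : Fin m → L →+* L) (hw : ∀ i, 0 < w i)
    (η : Fin n → L) (r : ℕ) :
    (trdegNat K (diffSubfield K α w η r) : ℕ∞) =
      (algMatroid K).eRk (transform α η '' {p | ordw w p.1 ≤ r}) := by
  have hfin : {p : (Fin m → ℕ) × Fin n | ordw w p.1 ≤ r}.Finite :=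
    (ordBall w r ×ˢ Finset.univ).finite_toSet.subset fun p hp => by
      simpa [mem_ordBall hw] using hp
  have hrk := eRk_subfieldClosure K (transform α η '' {p | ordw w p.1 ≤ r})
  rw [← diffSubfield_eq_closure] at hrk
  rw [coe_trdegNat, hrk]
  rw [← Matroid.eRk_lt_top_iff, hrk, Matroid.eRk_lt_top_iff]
  exact (algMatroid K).isRkFinite_of_finite (hfin.image _)

theorem exists_mul_card_ordBall_le_trdegNat
    (hcomm : ∀ i j, (α i).comp (α j) = (α j).comp (α i)) (hK : ∀ i, Set.MapsTo (α i) K K)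
    (hw : ∀ i, 0 < w i)
    (hgen : Subfield.closure ((K : Set L) ∪
      {x | ∃ (k : Fin m → ℕ) (i : Fin n), x = tauApp α k (η i)}) = ⊤)
    {d : ℕ} {b : Fin d → L} (hb : AlgebraicIndependent K (transform α b)) :
    ∃ e, ∀ r, d * (ordBall w r).card ≤ trdegNat K (diffSubfield K α w η (r + e)) := by
  choose f hf using fun i => exists_mem_diffSubfield w hgen (b i)
  refine ⟨Finset.univ.sup f, fun r => ?_⟩
  set s : Finset ((Fin m → ℕ) × Fin d) := ordBall w r ×ˢ Finset.univ with hs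
  have hsub : transform α b '' s ⊆ diffSubfield K α w η (r + Finset.univ.sup f) := by
    rintro _ ⟨⟨k, i⟩, hki, rfl⟩
    have hk : ordw w k ≤ r := by simpa [hs, mem_ordBall hw] using hki
    refine diffSubfield_mono K α w η ?_ (tauApp_mem_diffSubfield hcomm hK (hf i) k)
    rw [add_comm r]
    exact add_le_add (Finset.le_sup (Finset.mem_univ i)) hk
  have hindep : (algMatroid K).Indep (transform α b '' s) :=
    (AlgebraicIndependent.matroid_indep_iff.2 hb.to_subtype_range).subset
      (Set.image_subset_range ..)
  have hcard : (transform α b '' s).encard = (d * (ordBall w r).card : ℕ) := by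
    rw [hb.injective.encard_image, Set.encard_coe_eq_coe_finsetCard, hs, Finset.card_product,
      Finset.card_univ, Fintype.card_fin, mul_comm]
  rw [← Nat.cast_le (α := ℕ∞), ← hcard, coe_trdegNat_diffSubfield K α hw, ← eRk_subfieldClosure,
    ← diffSubfield_eq_closure]
  exact hindep.encard_le_eRk_of_subset hsub

lemma trdegNat_diffSubfield_le_card (hw : ∀ i, 0 < w i) {r : ℕ}
    {G : Finset ((Fin m → ℕ) × Fin n)}
    (hG : transform α η '' {p | ordw w p.1 ≤ r} ⊆ (algMatroid K).closure (transform α η '' G)) :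
    trdegNat K (diffSubfield K α w η r) ≤ G.card := by
  rw [← Nat.cast_le (α := ℕ∞), coe_trdegNat_diffSubfield K α hw]
  calc (algMatroid K).eRk (transform α η '' {p | ordw w p.1 ≤ r})
      ≤ (algMatroid K).eRk (transform α η '' G) := by
        rw [← (algMatroid K).eRk_closure_eq (transform α η '' G)]
        exact (algMatroid K).eRk_mono hG
    _ ≤ (transform α η '' G).encard := (algMatroid K).eRk_le_encard _
    _ ≤ (G : Set ((Fin m → ℕ) × Fin n)).encard := Set.encard_image_le _ _
    _ = G.card := Set.encard_coe_eq_coe_finsetCard G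

open scoped Classical in
theorem trdegNat_diffSubfield_le (hcomm : ∀ i j, (α i).comp (α j) = (α j).comp (α i))
    (hK : ∀ i, Set.MapsTo (α i) K K) (hw : ∀ i, 0 < w i) {J : Finset (Fin n)} {c : ℕ}
    {k : Fin n → Fin m → ℕ} (hk : ∀ j ∉ J, IsLeadingExponent K α w η J j c (k j)) (r : ℕ) :
    trdegNat K (diffSubfield K α w η r) ≤
      J.card * (ordBall w (r + c)).card + ∑ j ∈ Jᶜ, {l ∈ ordBall w r | ¬ k j ≤ l}.card := by
  set G : Finset ((Fin m → ℕ) × Fin n) := ordBall w (r + c) ×ˢ J ∪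
    Jᶜ.biUnion fun j => {l ∈ ordBall w r | ¬ k j ≤ l} ×ˢ {j} with hG
  have mem_G (l : Fin m → ℕ) (i : Fin n) : (l, i) ∈ (G : Set ((Fin m → ℕ) × Fin n)) ↔
      (ordw w l ≤ r + c ∧ i ∈ J) ∨ (i ∉ J ∧ ordw w l ≤ r ∧ ¬ k i ≤ l) := by
    simp only [hG, Finset.mem_coe, Finset.mem_union, Finset.mem_product, Finset.mem_biUnion,
      Finset.mem_compl, Finset.mem_filter, Finset.mem_singleton, mem_ordBall hw]
    grind
  have hspan : transform α η '' {p | ordw w p.1 ≤ r} ⊆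
      (algMatroid K).closure (transform α η '' G) := by
    rintro _ ⟨⟨l, j⟩, hl, rfl⟩
    by_cases hj : j ∈ J
    · exact apply_mem_closure_matroid_image ((mem_G l j).2 (Or.inl ⟨le_add_right hl, hj⟩))
    · refine (algMatroid K).closure_subset_closure (Set.image_mono ?_)
        ((hk j hj).transform_mem_closure hcomm hK hl)
      rintro ⟨l', i⟩ (⟨hi, hl'⟩ | ⟨hi, hl'⟩)
      · exact (mem_G l' i).2 (Or.inl ⟨hl', hi⟩)
      · obtain rfl : i = j := hi
        exact (mem_G l' i).2 (Or.inr ⟨hj, hl'⟩)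
  have hcard : G.card ≤
      J.card * (ordBall w (r + c)).card + ∑ j ∈ Jᶜ, {l ∈ ordBall w r | ¬ k j ≤ l}.card := by
    refine (Finset.card_union_le _ _).trans ?_
    rw [Finset.card_product, mul_comm]
    refine add_le_add_right (Finset.card_biUnion_le.trans_eq ?_) _
    simp only [Finset.card_product, Finset.card_singleton, mul_one]
  exact (trdegNat_diffSubfield_le_card hw hspan).trans hcard

theorem tendsto_trdegNat_diffSubfield_div_pow
    (hcomm : ∀ i j, (α i).comp (α j) = (α j).comp (α i)) (hK : ∀ i, Set.MapsTo (α i) K K)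
    (hw : ∀ i, 0 < w i)
    (hgen : Subfield.closure ((K : Set L) ∪
      {x | ∃ (k : Fin m → ℕ) (i : Fin n), x = tauApp α k (η i)}) = ⊤) :
    Tendsto (fun r : ℕ => (trdegNat K (diffSubfield K α w η r) : ℚ) / (r : ℚ) ^ m) atTop
      (𝓝 (sigmaTrdeg K α / (m.factorial * ∏ i, (w i : ℚ)))) := by
  classical
  obtain ⟨J, hJ, c, k, hk⟩ := exists_sigmaIndepOn_isLeadingExponent K α w η
  set C : ℚ := m.factorial * ∏ i, (w i : ℚ)
  have hC0 : 0 < C := mul_pos (by positivity) (Finset.prod_pos fun i _ => by exact_mod_cast hw i)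
  set t : ℕ → ℚ := fun r => trdegNat K (diffSubfield K α w η r) / (r : ℚ) ^ m
  obtain ⟨u, hu, htu⟩ : ∃ u : ℕ → ℚ, Tendsto u atTop (𝓝 (J.card / C)) ∧ ∀ r, t r ≤ u r := by
    refine ⟨_, tendsto_mul_card_add_sum_div_pow hw J.card c Jᶜ k, fun r => ?_⟩
    exact div_le_div_of_nonneg_right
      (by exact_mod_cast trdegNat_diffSubfield_le hcomm hK hw hk r) (by positivity)
  have hlower {d : ℕ} {b : Fin d → L} (hb : AlgebraicIndependent K (transform α b)) :
      ∃ (e : ℕ) (v : ℕ → ℚ), Tendsto v atTop (𝓝 (d / C)) ∧ ∀ r, v r ≤ t (r + e) := by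
    obtain ⟨e, he⟩ := exists_mul_card_ordBall_le_trdegNat hcomm hK hw hgen hb
    refine ⟨e, fun r => d * ((ordBall w r).card / ((r + e : ℕ) : ℚ) ^ m), ?_, fun r => ?_⟩
    · simpa only [mul_one_div, add_zero] using
        (tendsto_card_ordBall_div_pow hw 0 e).const_mul (d : ℚ)
    · dsimp only
      rw [mul_div_assoc']
      exact div_le_div_of_nonneg_right (by exact_mod_cast he r) (by positivity)
  have hu' (e : ℕ) : Tendsto (fun r => u (r + e)) atTop (𝓝 (J.card / C)) :=
    hu.comp (tendsto_add_atTop_nat e)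
  have hJind : AlgebraicIndependent K (transform α (η ∘ (↑) ∘ J.equivFin.symm)) :=
    algebraicIndependent_transform_comp hJ (Subtype.val_injective.comp J.equivFin.symm.injective)
      fun i => (J.equivFin.symm i).2
  have hσ : sigmaTrdeg K α = J.card := by
    refine IsGreatest.csSup_eq ⟨⟨_, hJind⟩, ?_⟩
    rintro d ⟨b, hb⟩
    obtain ⟨e, v, hv, hvt⟩ := hlower hb
    have h := le_of_tendsto_of_tendsto' hv (hu' e) fun r => (hvt r).trans (htu _)
    exact_mod_cast (div_le_div_iff_of_pos_right hC0).1 h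
  obtain ⟨e, v, hv, hvt⟩ := hlower hJind
  rw [hσ, ← tendsto_add_atTop_iff_nat e]
  exact tendsto_of_tendsto_of_tendsto_of_le_of_le hv (hu' e) hvt fun r => htu _

end DiffSubfield

theorem leading_coefficient_eq_sigma_trdeg_general {L : Type*} [Field L] (K : Subfield L)
    (m n : ℕ) (α : Fin m → L →+* L) (hcomm : ∀ i j, (α i).comp (α j) = (α j).comp (α i))
    (hK : ∀ i, ∀ x ∈ K, α i x ∈ K) (w : Fin m → ℕ) (hw : ∀ i, 0 < w i) (η : Fin n → L)
    (hgen : Subfield.closure ((K : Set L) ∪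
      {x | ∃ (k : Fin m → ℕ) (i : Fin n), x = tauApp α k (η i)}) = ⊤)
    (q : ℕ) (hq : 0 < q) (g : Fin q → Polynomial ℚ) (N : ℕ)
    (hΦ : ∀ r : ℕ, N ≤ r →
      (trdegNat K (diffSubfield K α w η r) : ℚ)
        = (g ⟨r % q, Nat.mod_lt r hq⟩).eval (r : ℚ))
    (i : Fin q) :
    (g i).natDegree ≤ m ∧
      (g i).coeff m = (sigmaTrdeg K α : ℚ) / ((Nat.factorial m : ℚ) * ∏ j, (w j : ℚ)) := by
  have hu : Tendsto (fun t : ℕ => i + q * t) atTop atTop :=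
    tendsto_atTop_mono (fun t => (Nat.le_mul_of_pos_left t hq).trans le_add_self) tendsto_id
  refine natDegree_le_and_coeff_eq_of_tendsto ((tendsto_natCast_atTop_atTop (R := ℚ)).comp hu) ?_
  have hlim := tendsto_trdegNat_diffSubfield_div_pow hcomm (fun i x hx => hK i x hx) hw hgen
  refine (hlim.comp hu).congr' ?_
  filter_upwards [hu.eventually_ge_atTop N] with t ht
  have hmod : (⟨(i + q * t) % q, Nat.mod_lt _ hq⟩ : Fin q) = i :=
    Fin.ext ((Nat.add_mul_mod_self_left ..).trans (Nat.mod_eq_of_lt i.2))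
  rw [Function.comp_apply, hΦ _ ht, hmod, Function.comp_apply]

/-- If `Φ` is a quasi-polynomial of degree at most `m` with `Φ(r) = trdeg_K L_r` for all
sufficiently large `r`, then the coefficient of `t^m` in every constituent polynomial
of `Φ` equals `d/(m!·w₁⋯w_m)` where `d` is the `σ`-transcendence degree of `L/K`. -/
theorem leading_coefficient_eq_sigma_trdeg
    {L : Type*} [Field L] [CharZero L] (K : Subfield L)
    (m n : ℕ) (hm : 0 < m) (α : Fin m → (L →+* L))
    (hcomm : ∀ i j, (α i).comp (α j) = (α j).comp (α i))
    (hinj : ∀ i, Function.Injective (α i))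
    (hK : ∀ i, ∀ x ∈ K, α i x ∈ K)
    (w : Fin m → ℕ) (hw : ∀ i, 0 < w i)
    (η : Fin n → L)
    (hgen : Subfield.closure ((K : Set L) ∪
      {x | ∃ (k : Fin m → ℕ) (i : Fin n), x = tauApp α k (η i)}) = ⊤)
    (q : ℕ) (hq : 0 < q) (g : Fin q → Polynomial ℚ)
    (hdeg : ∀ i : Fin q, (g i).natDegree ≤ m)
    (N : ℕ)
    (hΦ : ∀ r : ℕ, N ≤ r →
      (trdegNat K (diffSubfield K α w η r) : ℚ)
        = (g ⟨r % q, Nat.mod_lt r hq⟩).eval (r : ℚ)) :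
    ∀ i : Fin q, (g i).coeff m
      = (sigmaTrdeg K α : ℚ) / ((Nat.factorial m : ℚ) * ∏ j, (w j : ℚ)) :=
  fun i => (leading_coefficient_eq_sigma_trdeg_general K m n α hcomm hK w hw η hgen q hq g N hΦ i).2
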